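/- arXiv:0903.3395 — 2 statements merged into one kernel-verified Lean document; each statement's English description precedes it below -/
import Mathlib

section
/- Let X = (ℂ^n, ‖·‖) be a Banach space and m a positive integer. For each multi-index α with |α| = m set d_α := sup{|a_α| : P(z) = ∑_{|β|=m} a_β z^β is an m-homogeneous polynomial with sup_{z ∈ B_X} |P(z)| ≤ 1}. Then the projection constant of the space of m-homogeneous polynomials satisfies λ(𝒫(^m X)) ≤ sup_{‖z‖ ≤ 1} ∑_{|α|=m} d_α |z^α|. In particular, there is a bounded linear projection from ℓ_∞(B_X) (the bounded functions on B_X with sup norm) onto the subspace of restrictions of m-homogeneous polynomials to B_X, with norm at most sup_{‖z‖≤1} ∑_{|α|=m} d_α |z^α|. -/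
/-!
Hahn–Banach extends each coefficient functional `P ↦ a_α` from `𝒫(^m X)`, isometrically embedded
in a Banach space `Z`, to a functional on `Z` of norm at most `d_α`. Together the extensions send
`x ∈ Z` to a polynomial whose `α`-th coefficient is at most `d_α ‖x‖` in modulus, so its supremum
norm is at most `‖x‖ · sup_{‖z‖ ≤ 1} ∑ d_α |z^α|`, and polynomials are kept fixed. The numbers
`d_α` are finite because a polynomial is determined by its values on a set with nonempty interior
and `𝒫(^m X)` is finite-dimensional.
-/

open Finset MeasureTheory
open scoped ENNReal

/-- Coefficient space of `m`-homogeneous polynomials on `ℂ^n`: families of complex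
numbers indexed by the multi-indices `α` with `|α| = m`. -/
abbrev Coef (n m : ℕ) :=
  { α : Fin n → ℕ // α ∈ Finset.Nat.antidiagonalTuple n m } → ℂ

/-- Evaluation of the `m`-homogeneous polynomial `∑_{|α|=m} a_α z^α` at `z ∈ ℂ^n`. -/
noncomputable def evalC {n m : ℕ} (a : Coef n m) (z : Fin n → ℂ) : ℂ :=
  ∑ α : { α : Fin n → ℕ // α ∈ Finset.Nat.antidiagonalTuple n m },
    a α * ∏ i, z i ^ (α : Fin n → ℕ) i

/-- The norm of an `m`-homogeneous polynomial on `X = (ℂ^n, ν)`: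
`‖P‖ = sup_{ν(z) ≤ 1} |P(z)|`. -/
noncomputable def polyNorm (n m : ℕ) (ν : (Fin n → ℂ) → ℝ) (a : Coef n m) : ℝ :=
  sSup {x : ℝ | ∃ z : Fin n → ℂ, ν z ≤ 1 ∧ x = ‖evalC a z‖}

/-- The projection constant of `(V, νV)`: the supremum, over all isometric linear
embeddings `I : V → Z` into Banach spaces `Z`, of the infimum of `‖P‖` over all bounded
linear projections `P` of `Z` onto `I(V)`. -/
noncomputable def projConstWith (V : Type*) [AddCommGroup V] [Module ℂ V]
    (νV : V → ℝ) : ℝ :=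
  sSup {x : ℝ |
    ∃ (Z : Type) (_iZ : NormedAddCommGroup Z) (_iS : NormedSpace ℂ Z) (I : V →ₗ[ℂ] Z),
      (∀ v, ‖I v‖ = νV v) ∧
      x = sInf {c : ℝ | ∃ P : Z →L[ℂ] Z,
        (∀ v, P (I v) = I v) ∧ (∀ z, ∃ v, P z = I v) ∧ c = ‖P‖}}

/-- `d_α`: the supremum of `|a_α|` over all `m`-homogeneous polynomials `P = ∑ a_β z^β`
with `sup_{z ∈ B_X} |P(z)| ≤ 1`. -/
noncomputable def dCoef (n m : ℕ) (ν : (Fin n → ℂ) → ℝ)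
    (α : { α : Fin n → ℕ // α ∈ Finset.Nat.antidiagonalTuple n m }) : ℝ :=
  sSup {x : ℝ | ∃ a : Coef n m,
    (∀ z : Fin n → ℂ, ν z < 1 → ‖evalC a z‖ ≤ 1) ∧ x = ‖a α‖}

section Seminorm

universe u

-- The fresh type `F` keeps the norm `p` apart from the norm that `E` carries where this is applied.
theorem exists_linearEquiv_norm_eq_seminorm {𝕜 : Type*} {E : Type u} [NormedField 𝕜]
    [AddCommGroup E] [Module 𝕜 E] (p : Seminorm 𝕜 E) :
    ∃ (F : Type u) (_ : SeminormedAddCommGroup F) (_ : NormedSpace 𝕜 F) (e : E ≃ₗ[𝕜] F),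
      ∀ x, ‖e x‖ = p x := by
  let _ : Norm E := ⟨p⟩
  have core : SeminormedSpace.Core 𝕜 E := ⟨apply_nonneg p, map_smul_eq_mul p, map_add_le_add p⟩
  let _ : SeminormedAddCommGroup E := .ofCore core
  let _ : NormedSpace 𝕜 E := { norm_smul_le := fun c x => (map_smul_eq_mul p c x).le }
  exact ⟨E, inferInstance, inferInstance, LinearEquiv.refl 𝕜 E, fun _ => rfl⟩

variable {𝕜 E : Type*} [NontriviallyNormedField 𝕜] [CompleteSpace 𝕜] [NormedAddCommGroup E]
  [NormedSpace 𝕜 E] [FiniteDimensional 𝕜 E]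

theorem continuous_seminorm_of_finiteDimensional (p : Seminorm 𝕜 E) : Continuous p := by
  obtain ⟨F, _, _, e, he⟩ := exists_linearEquiv_norm_eq_seminorm p
  exact e.toLinearMap.continuous_of_finiteDimensional.norm.congr he

theorem nonempty_interior_setOf_seminorm_lt (p : Seminorm 𝕜 E) {r : ℝ} (hr : 0 < r) :
    (interior {x | p x < r}).Nonempty := by
  have hopen : IsOpen {x | p x < r} :=
    isOpen_lt (continuous_seminorm_of_finiteDimensional p) continuous_const
  exact ⟨0, hopen.interior_eq.symm ▸ (map_zero p).trans_lt hr⟩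

theorem isBounded_setOf_seminorm_le {p : Seminorm 𝕜 E} (hp : ∀ x, p x = 0 → x = 0) (r : ℝ) :
    Bornology.IsBounded {x | p x ≤ r} := by
  obtain ⟨F, _, _, e, he⟩ := exists_linearEquiv_norm_eq_seminorm p
  have hdef (y : F) (hy : ‖y‖ = 0) : y = 0 := by
    obtain ⟨x, rfl⟩ := e.surjective y
    rw [hp x (he x ▸ hy), map_zero]
  let _ : NormedAddCommGroup F := .ofSeparation hdef
  obtain ⟨K, -, hK⟩ := e.toLinearMap.exists_antilipschitzWith e.ker
  refine (hK.isBounded_preimage (Metric.isBounded_closedBall (x := 0) (r := r))).subset ?_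
  intro x hx
  simpa [he] using hx

end Seminorm

section Projection

variable {𝕜 Z : Type*} [RCLike 𝕜] [NormedAddCommGroup Z] [NormedSpace 𝕜 Z]

theorem exists_continuousLinearMap_comp_eq_norm_le {V : Type*} [AddCommGroup V] [Module 𝕜 V]
    (I : V →ₗ[𝕜] Z) (f : V →ₗ[𝕜] 𝕜) {d : ℝ} (hd : 0 ≤ d) (h : ∀ v, ‖f v‖ ≤ d * ‖I v‖) :
    ∃ φ : Z →L[𝕜] 𝕜, (∀ v, φ (I v) = f v) ∧ ‖φ‖ ≤ d := by
  obtain ⟨g, hg⟩ : f ∈ LinearMap.range I.dualMap := by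
    rw [LinearMap.range_dualMap_eq_dualAnnihilator_ker, Submodule.mem_dualAnnihilator]
    intro v hv
    simpa [LinearMap.mem_ker.mp hv] using h v
  have hgI : ∀ v, g (I v) = f v := LinearMap.congr_fun hg
  have hbound : ∀ x : LinearMap.range I, ‖g.domRestrict (LinearMap.range I) x‖ ≤ d * ‖x‖ := by
    rintro ⟨_, v, rfl⟩
    simpa [hgI] using h v
  obtain ⟨φ, hφ, hφ_norm⟩ := exists_extension_norm_eq (LinearMap.range I)
    ((g.domRestrict (LinearMap.range I)).mkContinuous d hbound)
  refine ⟨φ, fun v => ?_, hφ_norm ▸ LinearMap.mkContinuous_norm_le _ hd hbound⟩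
  exact (hφ ⟨I v, v, rfl⟩).trans (hgI v)

variable {ι : Type*} (I : (ι → 𝕜) →ₗ[𝕜] Z) {d : ι → ℝ} (hd : ∀ i, 0 ≤ d i)
  (hcoord : ∀ v i, ‖v i‖ ≤ d i * ‖I v‖)
include hd hcoord

theorem exists_leftInverse_norm_apply_le :
    ∃ φ : Z →ₗ[𝕜] ι → 𝕜, (∀ v, φ (I v) = v) ∧ ∀ x i, ‖φ x i‖ ≤ d i * ‖x‖ := by
  choose φ hφ hφ_norm using fun i =>
    exists_continuousLinearMap_comp_eq_norm_le I (LinearMap.proj i) (hd i) (hcoord · i)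
  refine ⟨LinearMap.pi fun i => (φ i).toLinearMap, fun v => funext fun i => hφ i v, ?_⟩
  exact fun x i => (φ i).le_of_opNorm_le (hφ_norm i) x

theorem exists_projection_norm_le {S : ℝ}
    (hS : ∀ v t, 0 ≤ t → (∀ i, ‖v i‖ ≤ d i * t) → ‖I v‖ ≤ S * t) :
    ∃ P : Z →L[𝕜] Z, (∀ v, P (I v) = I v) ∧ (∀ x, ∃ v, P x = I v) ∧ ‖P‖ ≤ S := by
  have hS_nonneg : 0 ≤ S := by simpa using hS 0 1 zero_le_one (by simpa using hd)
  obtain ⟨φ, hφ, hφ_le⟩ := exists_leftInverse_norm_apply_le I hd hcoord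
  have hbound : ∀ x, ‖(I ∘ₗ φ) x‖ ≤ S * ‖x‖ := fun x => hS _ _ (norm_nonneg x) (hφ_le x)
  exact ⟨(I ∘ₗ φ).mkContinuous S hbound, fun v => congrArg I (hφ v), fun x => ⟨φ x, rfl⟩,
    LinearMap.mkContinuous_norm_le _ hS_nonneg hbound⟩

end Projection

theorem projConstWith_le {V : Type*} [AddCommGroup V] [Module ℂ V] {νV : V → ℝ} {S : ℝ}
    (hS : 0 ≤ S)
    (h : ∀ (Z : Type) [NormedAddCommGroup Z] [NormedSpace ℂ Z] (I : V →ₗ[ℂ] Z),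
      (∀ v, ‖I v‖ = νV v) →
      ∃ P : Z →L[ℂ] Z, (∀ v, P (I v) = I v) ∧ (∀ z, ∃ v, P z = I v) ∧ ‖P‖ ≤ S) :
    projConstWith V νV ≤ S := by
  refine Real.sSup_le ?_ hS
  rintro _ ⟨Z, _, _, I, hI, rfl⟩
  obtain ⟨P, hP_id, hP_range, hP_norm⟩ := h Z I hI
  refine csInf_le_of_le ⟨0, ?_⟩ ⟨P, hP_id, hP_range, rfl⟩ hP_norm
  rintro _ ⟨Q, -, -, rfl⟩
  exact norm_nonneg Q

theorem bddAbove_image_of_isBounded {E : Type*} [PseudoMetricSpace E] [ProperSpace E] {s : Set E}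
    (hs : Bornology.IsBounded s) {f : E → ℝ} (hf : Continuous f) : BddAbove (f '' s) :=
  (hs.isCompact_closure.bddAbove_image hf.continuousOn).mono (Set.image_mono subset_closure)

section Polynomial

/-- The multi-indices `α ∈ ℕ^n` with `|α| = m`, the index type of `Coef n m`. -/
abbrev MultiIndex (n m : ℕ) := { α : Fin n → ℕ // α ∈ Finset.Nat.antidiagonalTuple n m }

variable {n m : ℕ}

theorem evalC_add (a b : Coef n m) (z : Fin n → ℂ) :
    evalC (a + b) z = evalC a z + evalC b z := by
  simp [evalC, add_mul, Finset.sum_add_distrib]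

theorem evalC_smul (c : ℂ) (a : Coef n m) (z : Fin n → ℂ) :
    evalC (c • a) z = c * evalC a z := by
  simp [evalC, Finset.mul_sum, mul_assoc]

theorem continuous_evalC (a : Coef n m) : Continuous (evalC a) := by
  unfold evalC
  fun_prop

/-- The formal polynomial `∑ a_α X^α`, giving access to `MvPolynomial`'s uniqueness theorems. -/
noncomputable def Coef.toMvPolynomial (a : Coef n m) : MvPolynomial (Fin n) ℂ :=
  ∑ α : MultiIndex n m, MvPolynomial.monomial (Finsupp.equivFunOnFinite.symm α.1) (a α)

theorem Coef.eval_toMvPolynomial (a : Coef n m) (z : Fin n → ℂ) :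
    MvPolynomial.eval z a.toMvPolynomial = evalC a z := by
  simp [toMvPolynomial, evalC, MvPolynomial.eval_monomial, Finsupp.prod_fintype]

theorem Coef.coeff_toMvPolynomial (a : Coef n m) (α : MultiIndex n m) :
    a.toMvPolynomial.coeff (Finsupp.equivFunOnFinite.symm α.1) = a α := by
  classical
  simp [toMvPolynomial, MvPolynomial.coeff_sum, MvPolynomial.coeff_monomial]

theorem eq_zero_of_evalC_eq_zero {D : Set (Fin n → ℂ)} (hD : (interior D).Nonempty)
    {a : Coef n m} (ha : ∀ z ∈ D, evalC a z = 0) : a = 0 := by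
  obtain ⟨x, hx⟩ := hD
  obtain ⟨r, hr, hball⟩ := Metric.mem_nhds_iff.mp (mem_interior_iff_mem_nhds.mp hx)
  have hpoly : a.toMvPolynomial = 0 := by
    refine MvPolynomial.funext_set (fun i => Metric.ball (x i) r)
      (fun i => infinite_of_mem_nhds (x i) (Metric.ball_mem_nhds _ hr)) fun z hz => ?_
    rw [← ball_pi x hr] at hz
    rw [a.eval_toMvPolynomial, ha z (hball hz), map_zero]
  funext α
  rw [← a.coeff_toMvPolynomial, hpoly, MvPolynomial.coeff_zero, Pi.zero_apply]

/-- Restriction of `m`-homogeneous polynomials to a bounded set `D`, as a linear map into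
`ℓ_∞(D)`. -/
noncomputable def evalLp {D : Set (Fin n → ℂ)} (hD : Bornology.IsBounded D) :
    Coef n m →ₗ[ℂ] lp (fun _ : D => ℂ) ∞ where
  toFun a := ⟨fun z => evalC a z, memℓp_infty <| by
    simpa only [Set.image_eq_range] using bddAbove_image_of_isBounded hD (continuous_evalC a).norm⟩
  map_add' a b := lp.ext <| funext fun z => evalC_add a b z
  map_smul' c a := lp.ext <| funext fun z => evalC_smul c a z

theorem exists_norm_le_mul_of_norm_evalC_le {D : Set (Fin n → ℂ)} (hD : (interior D).Nonempty) :
    ∃ K : ℝ, ∀ (a : Coef n m) (c : ℝ), (∀ z ∈ D, ‖evalC a z‖ ≤ c) → ‖a‖ ≤ K * c := by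
  obtain ⟨x, hx⟩ := hD
  obtain ⟨r, hr, hball⟩ := Metric.mem_nhds_iff.mp (mem_interior_iff_mem_nhds.mp hx)
  have hball_interior : (interior (Metric.ball x r)).Nonempty := by
    simpa only [Metric.isOpen_ball.interior_eq] using Metric.nonempty_ball.mpr hr
  let restrict := evalLp (m := m) (Metric.isBounded_ball (x := x) (r := r))
  have hker : LinearMap.ker restrict = ⊥ := by
    refine LinearMap.ker_eq_bot'.mpr fun a ha =>
      eq_zero_of_evalC_eq_zero hball_interior fun z hz => ?_
    exact congrArg (fun f => f ⟨z, hz⟩) ha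
  obtain ⟨K, -, hK⟩ := LinearMap.exists_antilipschitzWith _ hker
  refine ⟨K, fun a c hac => ?_⟩
  have hc : 0 ≤ c := (norm_nonneg _).trans (hac x (interior_subset hx))
  calc ‖a‖ ≤ K * ‖restrict a‖ := by simpa using hK.le_mul_dist a 0
    _ ≤ K * c := by
      gcongr
      exact lp.norm_le_of_forall_le hc fun z => hac z (hball z.2)

theorem norm_evalC_le_of_norm_apply_le {a : Coef n m} {d : MultiIndex n m → ℝ} {t : ℝ}
    (ha : ∀ α, ‖a α‖ ≤ d α * t) (z : Fin n → ℂ) :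
    ‖evalC a z‖ ≤ (∑ α : MultiIndex n m, d α * ‖∏ i, z i ^ α.1 i‖) * t := by
  rw [Finset.sum_mul]
  refine norm_sum_le_of_le _ fun α _ => ?_
  rw [norm_mul, mul_right_comm]
  gcongr
  exact ha α

end Polynomial

section Gauge

variable {n m : ℕ} {ν : (Fin n → ℂ) → ℝ}

/-- `sup_{ν(z) ≤ 1} ∑_{|α|=m} d_α |z^α|`, the bound for the projection constant. -/
noncomputable def coefMajorant (n m : ℕ) (ν : (Fin n → ℂ) → ℝ) : ℝ :=
  sSup {x : ℝ | ∃ z : Fin n → ℂ, ν z ≤ 1 ∧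
    x = ∑ α : MultiIndex n m, dCoef n m ν α * ‖∏ i, z i ^ α.1 i‖}

theorem dCoef_nonneg (α : MultiIndex n m) : 0 ≤ dCoef n m ν α := by
  refine Real.sSup_nonneg ?_
  rintro _ ⟨a, -, rfl⟩
  exact norm_nonneg _

theorem coefMajorant_nonneg : 0 ≤ coefMajorant n m ν := by
  refine Real.sSup_nonneg ?_
  rintro _ ⟨z, -, rfl⟩
  exact Finset.sum_nonneg fun α _ => mul_nonneg (dCoef_nonneg α) (norm_nonneg _)

theorem norm_apply_le_dCoef_mul (hint : (interior {z | ν z < 1}).Nonempty) {a : Coef n m}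
    {c : ℝ} (ha : ∀ z, ν z < 1 → ‖evalC a z‖ ≤ c) (α : MultiIndex n m) :
    ‖a α‖ ≤ dCoef n m ν α * c := by
  obtain ⟨K, hK⟩ := exists_norm_le_mul_of_norm_evalC_le (m := m) hint
  have hbddAbove : BddAbove {x : ℝ | ∃ a : Coef n m,
      (∀ z : Fin n → ℂ, ν z < 1 → ‖evalC a z‖ ≤ 1) ∧ x = ‖a α‖} := by
    refine ⟨K * 1, ?_⟩
    rintro _ ⟨b, hb, rfl⟩
    exact (norm_le_pi_norm b α).trans (hK b 1 hb)
  obtain ⟨z₀, hz₀⟩ := hint.mono interior_subset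
  rcases ((norm_nonneg _).trans (ha z₀ hz₀)).eq_or_lt with rfl | hc
  · simpa using (norm_le_pi_norm a α).trans (hK a 0 ha)
  · have hscale (x : ℂ) : ‖(c : ℂ)⁻¹ * x‖ = ‖x‖ / c := by
      rw [norm_mul, norm_inv, Complex.norm_of_nonneg hc.le, inv_mul_eq_div]
    rw [← div_le_iff₀ hc, ← hscale]
    refine le_csSup hbddAbove ⟨(c : ℂ)⁻¹ • a, fun z hz => ?_, rfl⟩
    rw [evalC_smul, hscale, div_le_one hc]
    exact ha z hz

variable (hbdd : Bornology.IsBounded {z | ν z ≤ 1})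
include hbdd

theorem le_sSup_of_continuous {g : (Fin n → ℂ) → ℝ} (hg : Continuous g) {z : Fin n → ℂ}
    (hz : ν z ≤ 1) : g z ≤ sSup {x : ℝ | ∃ z : Fin n → ℂ, ν z ≤ 1 ∧ x = g z} := by
  refine le_csSup ((bddAbove_image_of_isBounded hbdd hg).mono ?_) ⟨z, hz, rfl⟩
  rintro _ ⟨w, hw, rfl⟩
  exact ⟨w, hw, rfl⟩

theorem norm_evalC_le_polyNorm (a : Coef n m) {z : Fin n → ℂ} (hz : ν z ≤ 1) :
    ‖evalC a z‖ ≤ polyNorm n m ν a :=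
  le_sSup_of_continuous hbdd (continuous_evalC a).norm hz

theorem norm_evalC_le_coefMajorant_mul {a : Coef n m} {t : ℝ} (ht : 0 ≤ t)
    (ha : ∀ α, ‖a α‖ ≤ dCoef n m ν α * t) {z : Fin n → ℂ} (hz : ν z ≤ 1) :
    ‖evalC a z‖ ≤ coefMajorant n m ν * t := by
  refine (norm_evalC_le_of_norm_apply_le ha z).trans (mul_le_mul_of_nonneg_right ?_ ht)
  exact le_sSup_of_continuous
    (g := fun z => ∑ α : MultiIndex n m, dCoef n m ν α * ‖∏ i, z i ^ α.1 i‖)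
    hbdd (by fun_prop) hz

variable (hint : (interior {z | ν z < 1}).Nonempty)
include hint

theorem projConstWith_polyNorm_le :
    projConstWith (Coef n m) (polyNorm n m ν) ≤ coefMajorant n m ν := by
  refine projConstWith_le coefMajorant_nonneg fun Z _ _ I hI => ?_
  refine exists_projection_norm_le I (dCoef_nonneg (ν := ν)) (fun a α => ?_) fun a t ht ha => ?_
  · refine norm_apply_le_dCoef_mul hint (fun z hz => ?_) α
    rw [hI]
    exact norm_evalC_le_polyNorm hbdd a hz.le
  · rw [hI]
    refine Real.sSup_le ?_ (mul_nonneg coefMajorant_nonneg ht)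
    rintro _ ⟨z, hz, rfl⟩
    exact norm_evalC_le_coefMajorant_mul hbdd ht ha hz

theorem exists_evalLp_projection_norm_le (hbdd' : Bornology.IsBounded {z | ν z < 1}) :
    ∃ P : lp (fun _ : {z | ν z < 1} => ℂ) ∞ →L[ℂ] lp (fun _ : {z | ν z < 1} => ℂ) ∞,
      (∀ a : Coef n m, P (evalLp hbdd' a) = evalLp hbdd' a) ∧
      (∀ f, ∃ a : Coef n m, P f = evalLp hbdd' a) ∧ ‖P‖ ≤ coefMajorant n m ν := by
  refine exists_projection_norm_le _ (dCoef_nonneg (ν := ν)) (fun a α => ?_) fun a t ht ha => ?_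
  · refine norm_apply_le_dCoef_mul hint (fun z hz => ?_) α
    exact lp.norm_apply_le_norm ENNReal.top_ne_zero (evalLp hbdd' a) ⟨z, hz⟩
  · refine lp.norm_le_of_forall_le (mul_nonneg coefMajorant_nonneg ht) fun z => ?_
    exact norm_evalC_le_coefMajorant_mul hbdd ht ha z.2.le

end Gauge

theorem projection_constant_le_general (n m : ℕ) (ν : (Fin n → ℂ) → ℝ)
    (hbdd : Bornology.IsBounded {z | ν z ≤ 1}) (hint : (interior {z | ν z < 1}).Nonempty) :
    projConstWith (Coef n m) (polyNorm n m ν) ≤ coefMajorant n m ν ∧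
      ∃ P : lp (fun _ : {z : Fin n → ℂ // ν z < 1} => ℂ) ∞ →L[ℂ]
            lp (fun _ : {z : Fin n → ℂ // ν z < 1} => ℂ) ∞,
        (∀ f, ∃ a : Coef n m, ∀ z : {z : Fin n → ℂ // ν z < 1}, P f z = evalC a z.1) ∧
        (∀ f, (∃ a : Coef n m, ∀ z : {z : Fin n → ℂ // ν z < 1}, f z = evalC a z.1) →
          P f = f) ∧
        ‖P‖ ≤ coefMajorant n m ν := by
  have hbdd' : Bornology.IsBounded {z | ν z < 1} := hbdd.subset fun _ (hz : ν _ < 1) => hz.le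
  obtain ⟨P, hP_id, hP_range, hP_norm⟩ :=
    exists_evalLp_projection_norm_le (m := m) hbdd hint hbdd'
  refine ⟨projConstWith_polyNorm_le hbdd hint, P, fun f => ?_, ?_, hP_norm⟩
  · obtain ⟨a, ha⟩ := hP_range f
    exact ⟨a, fun z => congrArg (fun g => g z) ha⟩
  · rintro f ⟨a, ha⟩
    obtain rfl : f = evalLp hbdd' a := lp.ext (funext ha)
    exact hP_id a

/-- For `X = (ℂ^n, ν)`: `λ(𝒫(^m X)) ≤ sup_{ν(z) ≤ 1} ∑_{|α|=m} d_α |z^α|`, and there is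
a bounded linear projection of `ℓ_∞(B_X)` onto the subspace of restrictions of
`m`-homogeneous polynomials to `B_X` of norm at most this quantity. -/
theorem projection_constant_le (n m : ℕ) (hn : 0 < n) (hm : 0 < m)
    (ν : (Fin n → ℂ) → ℝ)
    (hadd : ∀ z w, ν (z + w) ≤ ν z + ν w)
    (hsmul : ∀ (c : ℂ) (z), ν (c • z) = ‖c‖ * ν z)
    (hdef : ∀ z, ν z = 0 → z = 0) :
    projConstWith (Coef n m) (polyNorm n m ν)
        ≤ sSup {x : ℝ | ∃ z : Fin n → ℂ, ν z ≤ 1 ∧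
            x = ∑ α : { α : Fin n → ℕ // α ∈ Finset.Nat.antidiagonalTuple n m },
              dCoef n m ν α * ‖∏ i, z i ^ (α : Fin n → ℕ) i‖}
      ∧ ∃ P : lp (fun _ : {z : Fin n → ℂ // ν z < 1} => ℂ) ∞ →L[ℂ]
            lp (fun _ : {z : Fin n → ℂ // ν z < 1} => ℂ) ∞,
          (∀ f, ∃ a : Coef n m, ∀ z : {z : Fin n → ℂ // ν z < 1}, P f z = evalC a z.1) ∧
          (∀ f, (∃ a : Coef n m, ∀ z : {z : Fin n → ℂ // ν z < 1}, f z = evalC a z.1) →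
            P f = f) ∧
          ‖P‖ ≤ sSup {x : ℝ | ∃ z : Fin n → ℂ, ν z ≤ 1 ∧
            x = ∑ α : { α : Fin n → ℕ // α ∈ Finset.Nat.antidiagonalTuple n m },
              dCoef n m ν α * ‖∏ i, z i ^ (α : Fin n → ℕ) i‖} := by
  let p : Seminorm ℂ (Fin n → ℂ) := .of ν hadd hsmul
  exact projection_constant_le_general n m ν (isBounded_setOf_seminorm_le (p := p) hdef 1)
    (nonempty_interior_setOf_seminorm_lt p one_pos)
end

section
/- Let 1 ≤ p ≤ 2 and let m, n be positive integers. For every m-homogeneous polynomial P(z) = ∑_{|β|=m} a_β z^β on ℂ^n with sup_{‖z‖_p ≤ 1} |P(z)| ≤ 1 and every multi-index α with |α| = m, one has |a_α| ≤ e^{m/p} · (m!/α!)^{1/p}, where α! = α₁!⋯α_n!. -/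
/-!
On the torus `|zᵢ| = rᵢ` the monomials are orthogonal, so a coefficient `a_α` times `r^α` is a
Fourier coefficient of the polynomial there and is at most its sup norm (Cauchy's estimate).
Among the tori inside the unit ball of `ℓ_p^n`, the one with `rᵢ ^ p = αᵢ / m` maximises `r^α`; it
gives `|a_α| ≤ (m^m / α^α)^{1/p}`, and the claim follows from `m^m ≤ e^m m!` and `α! ≤ α^α`.
-/

open Finset

/-- Evaluation of the `m`-homogeneous polynomial on `ℂ^n` with coefficient family `a`
(indexed by the multi-indices `α` with `|α| = m`) at the point `z`. -/
noncomputable def mhEval (n m : ℕ) (a : (Fin n → ℕ) → ℂ) (z : Fin n → ℂ) : ℂ :=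
  ∑ α ∈ Finset.Nat.antidiagonalTuple n m, a α * ∏ i, z i ^ α i

section TorusCoefficients

open MeasureTheory

variable {κ : Type*}

theorem norm_coeff_le_norm_sum_of_orthonormal {𝕜 E : Type*} [RCLike 𝕜] [SeminormedAddCommGroup E]
    [InnerProductSpace 𝕜 E] {v : κ → E} (hv : Orthonormal 𝕜 v) {s : Finset κ} (c : κ → 𝕜)
    {k : κ} (hk : k ∈ s) : ‖c k‖ ≤ ‖∑ j ∈ s, c j • v j‖ := by
  calc ‖c k‖ = ‖inner 𝕜 (v k) (∑ j ∈ s, c j • v j)‖ := by rw [hv.inner_right_sum c hk]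
    _ ≤ ‖v k‖ * ‖∑ j ∈ s, c j • v j‖ := norm_inner_le_norm _ _
    _ = ‖∑ j ∈ s, c j • v j‖ := by rw [hv.1 k, one_mul]

theorem norm_continuousMap_toLp_le {X E 𝕜 : Type*} [TopologicalSpace X] [CompactSpace X]
    [MeasurableSpace X] [BorelSpace X] [NormedAddCommGroup E] [SecondCountableTopologyEither X E]
    [NontriviallyNormedField 𝕜] [NormedSpace 𝕜 E] (q : ENNReal) [Fact (1 ≤ q)]
    (μ : Measure X) [IsProbabilityMeasure μ] (f : C(X, E)) :
    ‖ContinuousMap.toLp q μ 𝕜 f‖ ≤ ‖f‖ := by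
  have h_op : ‖(ContinuousMap.toLp q μ 𝕜 : C(X, E) →L[𝕜] Lp E q μ)‖ ≤ 1 := by
    simpa [measureUnivNNReal] using ContinuousMap.toLp_norm_le (E := E) (p := q) (𝕜 := 𝕜) μ
  simpa using ContinuousLinearMap.le_of_opNorm_le _ h_op f

theorem norm_coeff_le_norm_sum_mFourier {d : Type*} [Fintype d] {e : κ → d → ℤ}
    (he : Function.Injective e) {s : Finset κ} (c : κ → ℂ) {k : κ} (hk : k ∈ s) :
    ‖c k‖ ≤ ‖∑ j ∈ s, c j • UnitAddTorus.mFourier (e j)‖ := by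
  have h_orth := (UnitAddTorus.orthonormal_mFourier (d := d)).comp e he
  refine (norm_coeff_le_norm_sum_of_orthonormal h_orth c hk).trans ?_
  simp only [Function.comp_apply, UnitAddTorus.mFourierLp, ← map_smul, ← map_sum]
  -- Mathlib normalises the volume of `UnitAddCircle` by a local instance, so the measure behind
  -- `mFourierLp` has to be named.
  exact norm_continuousMap_toLp_le 2 (Measure.pi fun _ : d ↦ AddCircle.haarAddCircle) _

end TorusCoefficients

theorem norm_coeff_mul_prod_pow_le_of_torus {ι : Type*} [Fintype ι] {S : Finset (ι → ℕ)}
    {a : (ι → ℕ) → ℂ} {r : ι → ℝ} {M : ℝ} (hr : ∀ i, 0 ≤ r i)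
    (ha : ∀ z : ι → ℂ, (∀ i, ‖z i‖ = r i) → ‖∑ β ∈ S, a β * ∏ i, z i ^ β i‖ ≤ M)
    {α : ι → ℕ} (hα : α ∈ S) : ‖a α‖ * ∏ i, r i ^ α i ≤ M := by
  set c : (ι → ℕ) → ℂ := fun β ↦ a β * ∏ i, (r i : ℂ) ^ β i
  set e : (ι → ℕ) → ι → ℤ := fun β i ↦ β i
  have he : Function.Injective e := fun β γ h ↦ funext fun i ↦ Nat.cast_injective (congrFun h i)
  have h_torus (t : UnitAddTorus ι) : (∑ β ∈ S, c β • UnitAddTorus.mFourier (e β)) t =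
      ∑ β ∈ S, a β * ∏ i, (r i * (t i).toCircle : ℂ) ^ β i := by
    simp [c, e, UnitAddTorus.mFourier, mul_pow, prod_mul_distrib, AddCircle.toCircle_nsmul,
      mul_assoc]
  have h_norm (t : UnitAddTorus ι) :
      ‖(∑ β ∈ S, c β • UnitAddTorus.mFourier (e β)) t‖ ≤ M := by
    rw [h_torus]
    exact ha _ fun i ↦ by
      rw [norm_mul, Circle.norm_coe, mul_one, Complex.norm_of_nonneg (hr i)]
  calc ‖a α‖ * ∏ i, r i ^ α i = ‖c α‖ := by simp [c, abs_of_nonneg, hr]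
    _ ≤ ‖∑ β ∈ S, c β • UnitAddTorus.mFourier (e β)‖ := norm_coeff_le_norm_sum_mFourier he c hα
    _ ≤ M := (ContinuousMap.norm_le_of_nonempty _).2 h_norm

theorem norm_coeff_mhEval_le_rpow {p : ℝ} (hp : 0 < p) {m n : ℕ} {a : (Fin n → ℕ) → ℂ}
    (ha : ∀ z : Fin n → ℂ, (∑ i, ‖z i‖ ^ p) ^ (1 / p) ≤ 1 → ‖mhEval n m a z‖ ≤ 1)
    {α : Fin n → ℕ} (hα : α ∈ Finset.Nat.antidiagonalTuple n m) :
    ‖a α‖ ≤ ((m : ℝ) ^ m / ∏ i, (α i : ℝ) ^ α i) ^ (1 / p) := by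
  have h_sum : ∑ i, α i = m := Finset.Nat.mem_antidiagonalTuple.mp hα
  have h_pos : 0 < ∏ i, (α i : ℝ) ^ α i := prod_pos fun i _ ↦ mod_cast Nat.pow_self_pos
  have h_mpos : (0 : ℝ) < (m : ℝ) ^ m := mod_cast Nat.pow_self_pos
  set r : Fin n → ℝ := fun i ↦ (α i / m : ℝ) ^ (1 / p) with hr
  have h_ball (z : Fin n → ℂ) (hz : ∀ i, ‖z i‖ = r i) : (∑ i, ‖z i‖ ^ p) ^ (1 / p) ≤ 1 := by
    have h_pow (i : Fin n) : ‖z i‖ ^ p = α i / m := by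
      rw [hz, hr, one_div, Real.rpow_inv_rpow (by positivity) hp.ne']
    simp only [h_pow, ← sum_div, ← Nat.cast_sum, h_sum]
    exact Real.rpow_le_one (by positivity) (div_self_le_one _) (by positivity)
  have h_prod : ∏ i, r i ^ α i = ((∏ i, (α i : ℝ) ^ α i) / (m : ℝ) ^ m) ^ (1 / p) := by
    have h_comm (i : Fin n) : r i ^ α i = ((α i : ℝ) ^ α i / (m : ℝ) ^ α i) ^ (1 / p) := by
      rw [hr, Real.rpow_pow_comm (by positivity), div_pow]
    simp only [h_comm]
    rw [Real.finsetProd_rpow _ _ fun i _ ↦ by positivity, prod_div_distrib, prod_pow_eq_pow_sum,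
      h_sum]
  have h_cauchy : ‖a α‖ * ∏ i, r i ^ α i ≤ 1 :=
    norm_coeff_mul_prod_pow_le_of_torus (fun i ↦ by positivity)
      (fun z hz ↦ ha z (h_ball z hz)) hα
  have h_prod_pos : 0 < ∏ i, r i ^ α i := by rw [h_prod]; positivity
  calc ‖a α‖ ≤ (∏ i, r i ^ α i)⁻¹ := by rwa [← one_div, le_div_iff₀ h_prod_pos]
    _ = ((m : ℝ) ^ m / ∏ i, (α i : ℝ) ^ α i) ^ (1 / p) := by
      rw [h_prod, ← Real.inv_rpow (by positivity), inv_div]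

theorem sum_pow_sum_div_prod_pow_self_le_exp_mul {ι : Type*} (s : Finset ι) (k : ι → ℕ) :
    ((∑ i ∈ s, k i : ℕ) : ℝ) ^ (∑ i ∈ s, k i) / ∏ i ∈ s, (k i : ℝ) ^ k i ≤
      Real.exp (∑ i ∈ s, k i : ℕ) *
        ((∑ i ∈ s, k i).factorial / ∏ i ∈ s, ((k i).factorial : ℝ)) := by
  set N := ∑ i ∈ s, k i
  have h_num : (N : ℝ) ^ N ≤ Real.exp N * N.factorial := by
    have := Real.pow_div_factorial_le_exp (N : ℝ) N.cast_nonneg N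
    rwa [div_le_iff₀ (by positivity)] at this
  have h_den : ∏ i ∈ s, ((k i).factorial : ℝ) ≤ ∏ i ∈ s, (k i : ℝ) ^ k i :=
    prod_le_prod (fun i _ ↦ by positivity) fun i _ ↦ mod_cast (k i).factorial_le_pow
  rw [← mul_div_assoc]
  exact div_le_div₀ (by positivity) h_num (by positivity) h_den

theorem coefficient_estimate_lp_general {p : ℝ} (hp : 0 < p) {m n : ℕ} {a : (Fin n → ℕ) → ℂ}
    (ha : ∀ z : Fin n → ℂ, (∑ i, ‖z i‖ ^ p) ^ (1 / p) ≤ 1 → ‖mhEval n m a z‖ ≤ 1)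
    {α : Fin n → ℕ} (hα : α ∈ Finset.Nat.antidiagonalTuple n m) :
    ‖a α‖ ≤ Real.exp ((m : ℝ) / p) *
      ((Nat.factorial m : ℝ) / ∏ i, (Nat.factorial (α i) : ℝ)) ^ (1 / p) := by
  have h_sum : ∑ i, α i = m := Finset.Nat.mem_antidiagonalTuple.mp hα
  calc ‖a α‖ ≤ ((m : ℝ) ^ m / ∏ i, (α i : ℝ) ^ α i) ^ (1 / p) :=
        norm_coeff_mhEval_le_rpow hp ha hα
    _ ≤ (Real.exp m * (m.factorial / ∏ i, ((α i).factorial : ℝ))) ^ (1 / p) := by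
        have h_stirling := sum_pow_sum_div_prod_pow_self_le_exp_mul univ α
        rw [h_sum] at h_stirling
        gcongr
    _ = Real.exp (m / p) * (m.factorial / ∏ i, ((α i).factorial : ℝ)) ^ (1 / p) := by
        rw [Real.mul_rpow (by positivity) (by positivity), ← Real.exp_mul, mul_one_div]

/-- Coefficient estimate for `m`-homogeneous polynomials on `ℓ_p^n`, `1 ≤ p ≤ 2`:
if `sup_{‖z‖_p ≤ 1} |P(z)| ≤ 1` then `|a_α| ≤ e^{m/p} · (m!/α!)^{1/p}`. -/
theorem coefficient_estimate_lp (p : ℝ) (hp1 : 1 ≤ p) (hp2 : p ≤ 2)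
    (m n : ℕ) (hm : 0 < m) (hn : 0 < n) (a : (Fin n → ℕ) → ℂ)
    (ha : ∀ z : Fin n → ℂ, (∑ i, ‖z i‖ ^ p) ^ (1 / p) ≤ 1 → ‖mhEval n m a z‖ ≤ 1)
    (α : Fin n → ℕ) (hα : α ∈ Finset.Nat.antidiagonalTuple n m) :
    ‖a α‖ ≤ Real.exp ((m : ℝ) / p) *
      ((Nat.factorial m : ℝ) / ∏ i, (Nat.factorial (α i) : ℝ)) ^ (1 / p) :=
  coefficient_estimate_lp_general (zero_lt_one.trans_le hp1) ha hα
end
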